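/- Define Ω_{−4,1}(X,Y)(f) = 2X^(4)Y″f′ + 3X‴Y″f″ − (X↔Y) and Ω̃_{−4,1}(X,Y)(f) = 12X^(6)Y′f + 22X^(5)Y′f′ + 5X^(4)Y′f″ + 10X′Y‴f‴ + 5X′Y″f^(4) − (X↔Y), where −(X↔Y) means subtracting the same expression with X and Y exchanged. Then Ω_{−4,1} = −[[C_{−1,1}, C_{−4,−1}]] (with C_{−1,1}(X)(f) = X‴f + 2X″f′ valued in D_{−1,1} and C_{−4,−1}(X)(f) = X‴f′ + X″f″ valued in D_{−4,−1}), Ω̃_{−4,1} = −[[C_{1,1}, C_{−4,1}]] (with C_{1,1}(X)(f) = X′f valued in D_{1,1} and C_{−4,1}(X)(f) = 12X^(6)f + 22X^(5)f′ + 5X^(4)f″ − 10X‴f‴ − 5X″f^(4) valued in D_{−4,1}), and both Ω_{−4,1} and Ω̃_{−4,1} are 2-cocycles on Vect(1) with values in D_{−4,1}. -/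

import Mathlib

noncomputable section

/-- Polynomials over ℝ, identified with polynomial vector fields / densities on the line. -/
abbrev P : Type := Polynomial ℝ

/-- Derivative d/dx. -/
def D : P → P := fun f => Polynomial.derivative f

/-- Iterated derivative: `Dk k f = f^(k)`. -/
def Dk (k : ℕ) : P → P := D^[k]

/-- Lie bracket on Vect(1): [X,Y] = XY' - X'Y. -/
def br (X Y : P) : P := X * D Y - D X * Y

/-- Action of the vector field X on λ-densities: `L_X^λ f = X f' + λ X' f`. -/
def Lw (l : ℝ) (X f : P) : P := X * D f + Polynomial.C l * D X * f

/-- Action on operators from F_ν to F_μ: `L_X^{ν,μ}(A) = L_X^μ ∘ A - A ∘ L_X^ν`. -/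
def LD (nu mu : ℝ) (X : P) (A : P → P) (f : P) : P := Lw mu X (A f) - A (Lw nu X f)

/-- 1-cocycle condition with values in D_{ν,μ}. -/
def IsCocycle1 (nu mu : ℝ) (c : P → P → P) : Prop :=
  ∀ X Y f, c (br X Y) f = LD nu mu X (c Y) f - LD nu mu Y (c X) f

/-- 2-cocycle condition with values in D_{ν,μ}. -/
def IsCocycle2 (nu mu : ℝ) (o : P → P → P → P) : Prop :=
  ∀ X Y Z f,
    LD nu mu X (o Y Z) f - LD nu mu Y (o X Z) f + LD nu mu Z (o X Y) f
      - o (br X Y) Z f + o (br X Z) Y f - o (br Y Z) X f = 0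

/-- Cup product of 1-cochains: `[[C₁,C₂]](X,Y) = C₁(X)∘C₂(Y) - C₁(Y)∘C₂(X)`. -/
def cup (c₁ c₂ : P → P → P) (X Y f : P) : P := c₁ X (c₂ Y f) - c₁ Y (c₂ X f)

/-- Coboundary of a 1-cochain b with values in D_{ν,μ}. -/
def cob (nu mu : ℝ) (b : P → P → P) (X Y f : P) : P :=
  LD nu mu X (b Y) f - LD nu mu Y (b X) f - b (br X Y) f


/-- Half of the 2-cocycle `Ω_{-4,1}`. -/
def term14a (X Y f : P) : P := 2 * Dk 4 X * Dk 2 Y * D f + 3 * Dk 3 X * Dk 2 Y * Dk 2 f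

/-- Half of the 2-cocycle `Ω̃_{-4,1}`. -/
def term14b (X Y f : P) : P :=
  12 * Dk 6 X * D Y * f + 22 * Dk 5 X * D Y * D f + 5 * Dk 4 X * D Y * Dk 2 f
    + 10 * D X * Dk 3 Y * Dk 3 f + 5 * D X * Dk 2 Y * Dk 4 f

lemma D_add' (a b : P) : D (a + b) = D a + D b := by simp [D]

lemma D_sub' (a b : P) : D (a - b) = D a - D b := by simp [D]

lemma D_neg' (a : P) : D (-a) = -D a := by simp [D]

lemma D_mul' (a b : P) : D (a * b) = D a * b + a * D b := by simp [D]

lemma D_lit_two : D (2 : P) = 0 := Polynomial.derivative_ofNat 2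

lemma D_lit_three : D (3 : P) = 0 := Polynomial.derivative_ofNat 3

lemma D_lit_four : D (4 : P) = 0 := Polynomial.derivative_ofNat 4

lemma D_lit_five : D (5 : P) = 0 := Polynomial.derivative_ofNat 5

lemma D_lit_ten : D (10 : P) = 0 := Polynomial.derivative_ofNat 10

lemma D_lit_twelve : D (12 : P) = 0 := Polynomial.derivative_ofNat 12

lemma D_lit_twentytwo : D (22 : P) = 0 := Polynomial.derivative_ofNat 22

lemma D_one' : D (1 : P) = 0 := by simp [D]

lemma D_zero' : D (0 : P) = 0 := by simp [D]

lemma C_neg_four : (Polynomial.C (-4 : ℝ) : P) = -4 := by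
  rw [Polynomial.C_neg]; rfl

/-- `Ω_{-4,1} = -[[C_{-1,1},C_{-4,-1}]]` and
`Ω̃_{-4,1} = -[[C_{1,1},C_{-4,1}]]` are 2-cocycles with values in `D_{-4,1}`. -/
theorem Om41_two_cocycles :
    (∀ X Y f : P, term14a X Y f - term14a Y X f =
      - cup (fun X f => Dk 3 X * f + 2 * Dk 2 X * D f)
          (fun X f => Dk 3 X * D f + Dk 2 X * Dk 2 f) X Y f) ∧
    (∀ X Y f : P, term14b X Y f - term14b Y X f =
      - cup (fun X f => D X * f)
          (fun X f => 12 * Dk 6 X * f + 22 * Dk 5 X * D f + 5 * Dk 4 X * Dk 2 f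
            - 10 * Dk 3 X * Dk 3 f - 5 * Dk 2 X * Dk 4 f) X Y f) ∧
    IsCocycle2 (-4) 1 (fun X Y f => term14a X Y f - term14a Y X f) ∧
    IsCocycle2 (-4) 1 (fun X Y f => term14b X Y f - term14b Y X f) := by
  refine ⟨?_, ?_, ?_, ?_⟩
  · intro X Y f
    simp only [term14a, cup, Dk, Function.iterate_succ, Function.iterate_zero,
      Function.comp, id, D_add', D_sub', D_mul', D_lit_two, D_lit_three, D_lit_four, D_zero']
    ring
  · intro X Y f
    simp only [term14b, cup, Dk, Function.iterate_succ, Function.iterate_zero,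
      Function.comp, id]
    ring
  · intro X Y Z f
    simp only [term14a, LD, Lw, br, Dk, Function.iterate_succ, Function.iterate_zero,
      Function.comp, id, C_neg_four, Polynomial.C_1, one_mul,
      D_add', D_sub', D_neg', D_mul', D_lit_two, D_lit_three, D_lit_four, D_zero', zero_mul, zero_add, neg_zero]
    ring
  · intro X Y Z f
    simp only [term14b, LD, Lw, br, Dk, Function.iterate_succ, Function.iterate_zero,
      Function.comp, id, C_neg_four, Polynomial.C_1, one_mul,
      D_add', D_sub', D_neg', D_mul', D_lit_two, D_lit_three, D_lit_four,
      D_lit_five, D_lit_ten, D_lit_twelve, D_lit_twentytwo, D_zero', zero_mul, zero_add, neg_zero]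
    ring
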